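/- Randomness with respect to a countable mixture: let {P_n}_{n∈ℕ} be a uniformly computable family of probabilities on (Ω,B), let α be a computable probability on ℕ with α(n) > 0 for all n, and let P := Σ_n α(n) P_n (a computable probability). Then R^P = ∪_n R^{P_n}. -/

import Mathlib

/-!
# Randomness with respect to a countable mixture

If `ω` is random for some `P_n` and `U` is a test for the mixture `P`, choose `c` with
`2⁻ᶜ ≤ α n`. Since `α n • P_n ≤ P`, the shifted levels `U_{m+c}` have `P_n`-measure below `2⁻ᵐ`, so
they form a test for `P_n`, and `ω` avoids their intersection (`isMLTest_shift`).

Conversely, suppose that `ω` is random for no `P_n`. The failing tests may be chosen independently for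
each `n`, so a single test for `P` requires tests for the `P_n` that are universal uniformly in `n`.
They come from a computable enumeration of all r.e. sets (`exists_universal`): a string enumerated into
level `m` of the set with index `c` is accepted only if the part of the level enumerated so far has
`P_n`-measure below `2⁻ᵐ`. This is a semi-decidable condition by uniform computability of the family
(`stage_lt_iff`, `sig_stage`). Level `j` of the universal test is the union over `c` of the accepted parts
of the levels `j + c + 3`; it has `P_n`-measure at most `2^{-(j+2)}`.

By computability of `α` one can also semi-decide that the weights from `N` on add up to less than
`2^{-(j+2)}` (`sig_tail`). Sequences that lie in level `j` of the universal test for `P_n` for all `n < N`,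
for such an `N`, form a set of `P`-measure at most `2^{-(j+1)} < 2⁻ʲ` (`mixture_mixOpen_lt`). These
sets, intersected over `j ≤ m` to make them nested, are generated by an r.e. set of strings, which is a test
for `P` (`isMLTest_mixTest`), and `ω` lies in all its levels (`mem_testUnion_mixTest`).

Approximations are computable maps into `ℚ`, and the encoding of `ℚ` is the rank of a rational among all
codes of rationals, so numerator and denominator first have to be shown to be computable
(`computable_ratCode`). After that all approximations are replaced by natural numbers (`ratScale`).
-/

open MeasureTheory Filter Set
open scoped ENNReal NNReal

namespace AlgRand

/-- `S` : finite binary strings. -/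
abbrev S : Type := List Bool

/-- `Seq` : infinite binary sequences (the space Ω). -/
abbrev Seq : Type := ℕ → Bool

/-- A finite string is a prefix of an infinite sequence. -/
def PrefixSeq (x : S) (ω : Seq) : Prop := ∀ i : Fin x.length, x.get i = ω i

/-- The first `n` bits of an infinite sequence. -/
def seqTake (ω : Seq) (n : ℕ) : S := List.ofFn fun i : Fin n => ω i

/-- Cylinder set Δ(x) ⊆ Ω. -/
def cyl (x : S) : Set Seq := {ω | PrefixSeq x ω}

/-- Product cylinder Δ(x,y) ⊆ Ω². -/
def cyl2 (xy : S × S) : Set (Seq × Seq) := cyl xy.1 ×ˢ cyl xy.2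

/-- Prefix (partial order) on S². -/
def Pre2 (a b : S × S) : Prop := a.1 <+: b.1 ∧ a.2 <+: b.2

/-- A pair of strings is a (strict) prefix of a pair of sequences. -/
def Pre2Seq (a : S × S) (ω : Seq × Seq) : Prop := PrefixSeq a.1 ω.1 ∧ PrefixSeq a.2 ω.2

/-- Recursively enumerable subset of a primcodable type. -/
def RESet {β : Type} [Primcodable β] (A : Set β) : Prop :=
  ∃ f : ℕ → Option β, Computable f ∧ A = {a | ∃ n, f n = some a}

/-- A computable probability measure on Ω. -/
def ComputableProb (P : Measure Seq) : Prop :=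
  IsProbabilityMeasure P ∧
    ∃ p : S × ℕ → ℚ, Computable p ∧
      ∀ (x : S) (k : ℕ), 0 < k → |(P (cyl x)).toReal - (p (x, k) : ℝ)| < 1 / k

/-- A computable probability measure on Ω². -/
def ComputableProb2 (P : Measure (Seq × Seq)) : Prop :=
  IsProbabilityMeasure P ∧
    ∃ p : (S × S) × ℕ → ℚ, Computable p ∧
      ∀ (xy : S × S) (k : ℕ), 0 < k → |(P (cyl2 xy)).toReal - (p (xy, k) : ℝ)| < 1 / k

/-- Ũ_n, the open set covered by the n-th level of a test. -/
def testUnion {α β : Type} (C : β → Set α) (U : Set (ℕ × β)) (n : ℕ) : Set α :=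
  ⋃ x ∈ {x | (n, x) ∈ U}, C x

/-- Martin-Löf test w.r.t. a measure, generic in the cylinder function `C`. -/
def IsMLTest {α β : Type} [MeasurableSpace α] [Primcodable β]
    (C : β → Set α) (P : Measure α) (U : Set (ℕ × β)) : Prop :=
  RESet U ∧ (∀ n, testUnion C U (n + 1) ⊆ testUnion C U n) ∧
    ∀ n, P (testUnion C U n) < (2⁻¹ : ℝ≥0∞) ^ n

/-- Martin-Löf randomness: ω avoids the limit of every test. -/
def MLRandom {α β : Type} [MeasurableSpace α] [Primcodable β]
    (C : β → Set α) (P : Measure α) (ω : α) : Prop :=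
  ∀ U, IsMLTest C P U → ω ∉ ⋂ n, testUnion C U n

/-- ω ∈ R^P, for P on Ω. -/
abbrev Random1 (P : Measure Seq) (ω : Seq) : Prop := MLRandom cyl P ω

/-- ω ∈ R^P, for P on Ω². -/
abbrev Random2 (P : Measure (Seq × Seq)) (ω : Seq × Seq) : Prop := MLRandom cyl2 P ω

/-- Marginal distribution P_X on the first coordinate. -/
noncomputable def margX (P : Measure (Seq × Seq)) : Measure Seq := P.map Prod.fst

/-- Marginal distribution P_Y on the second coordinate. -/
noncomputable def margY (P : Measure (Seq × Seq)) : Measure Seq := P.map Prod.snd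

/-- Conditional probability P(x|y) = P(x,y)/P_Y(y), with value 0 when P_Y(y) = 0. -/
noncomputable def condP (P : Measure (Seq × Seq)) (x y : S) : ℝ :=
  (P (cyl2 (x, y))).toReal / (P (Set.univ ×ˢ cyl y)).toReal

/-- P(x|yinf) := lim_{y → yinf} P(x|y) along prefixes of yinf (junk value if no limit). -/
noncomputable def condPLim (P : Measure (Seq × Seq)) (x : S) (yinf : Seq) : ℝ :=
  limUnder atTop fun m => condP P x (seqTake yinf m)

/-- Conditional probability P(y|x) = P(x,y)/P_X(x), with value 0 when P_X(x) = 0. -/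
noncomputable def condX (P : Measure (Seq × Seq)) (y x : S) : ℝ :=
  (P (cyl2 (x, y))).toReal / (P (cyl x ×ˢ Set.univ)).toReal

/-- P(y|xinf) := lim_{x → xinf} P(y|x) along prefixes of xinf (junk value if no limit). -/
noncomputable def condXLim (P : Measure (Seq × Seq)) (y : S) (xinf : Seq) : ℝ :=
  limUnder atTop fun m => condX P y (seqTake xinf m)

/-- The set S ∪ Ω of finite or infinite binary sequences. -/
inductive SW : Type where
  | fin : S → SW
  | inf : Seq → SW

/-- Prefix order ⊑ on S ∪ Ω. -/
def SW.le : SW → SW → Prop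
  | .fin x, .fin y => x <+: y
  | .fin x, .inf ω => PrefixSeq x ω
  | .inf ω, .inf ω' => ω = ω'
  | .inf _, .fin _ => False

/-- (S ∪ Ω)². -/
abbrev SW2 : Type := SW × SW

/-- Componentwise prefix order ⊑ on (S ∪ Ω)². -/
def SW2.le (a b : SW2) : Prop := SW.le a.1 b.1 ∧ SW.le a.2 b.2

/-- Length |x| ∈ ℕ∞ of an element of S ∪ Ω. -/
def SW.len : SW → ℕ∞
  | .fin x => (x.length : ℕ∞)
  | .inf _ => ⊤

/-- |p| = |p₁| + |p₂| for p ∈ (S ∪ Ω)². -/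
def SW2.len (a : SW2) : ℕ∞ := SW.len a.1 + SW.len a.2

/-- Δ(x) for x ∈ S ∪ Ω. -/
def SW.cylW : SW → Set Seq
  | .fin x => cyl x
  | .inf ω => {ω}

/-- Δ(x,y) for (x,y) ∈ (S ∪ Ω)². -/
def SW2.cylW (a : SW2) : Set (Seq × Seq) := SW.cylW a.1 ×ˢ SW.cylW a.2

/-- Embedding S → S ∪ Ω. -/
def emb1 (x : S) : SW := SW.fin x

/-- Embedding S² → (S ∪ Ω)². -/
def emb2 (p : S × S) : SW2 := (SW.fin p.1, SW.fin p.2)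

/-- Embedding Ω² → (S ∪ Ω)². -/
def inf2 (ω : Seq × Seq) : SW2 := (SW.inf ω.1, SW.inf ω.2)

/-- Least upper bound with respect to a relation. -/
def IsSupRel {V : Type} (le : V → V → Prop) (A : Set V) (s : V) : Prop :=
  (∀ a ∈ A, le a s) ∧ ∀ b, (∀ a ∈ A, le a b) → le s b

/-- `f` is a computable monotone function defined by an r.e. set `F` satisfying
condition (3) of the paper:  (λ,λ) ∈ F_p and ⋁_{p'⊑p} F_{p'} exists for every p,
and f(q) = ⋁ {x : ∃ p' ⊑ q, (p',x) ∈ F}. -/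
def CompMono {D E : Type} {W V : Type} [Primcodable D] [Primcodable E]
    (embD : D → W) (leW : W → W → Prop) (embE : E → V) (leV : V → V → Prop)
    (eps : E) (f : W → V) : Prop :=
  ∃ F : Set (D × E), RESet F ∧
    (∀ p : D, (p, eps) ∈ F ∧
        ∃ s, IsSupRel leV (embE '' {x | ∃ p' : D, leW (embD p') (embD p) ∧ (p', x) ∈ F}) s) ∧
    ∀ q : W, IsSupRel leV (embE '' {x | ∃ p' : D, leW (embD p') q ∧ (p', x) ∈ F}) (f q)

/-- Computable monotone function (S ∪ Ω)² → (S ∪ Ω)². -/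
def CompMono22 (f : SW2 → SW2) : Prop := CompMono emb2 SW2.le emb2 SW2.le (([], []) : S × S) f

/-- Computable monotone function S ∪ Ω → (S ∪ Ω)². -/
def CompMono12 (g : SW → SW2) : Prop := CompMono emb1 SW.le emb2 SW2.le (([], []) : S × S) g

/-- Computable monotone function (S ∪ Ω)² → S ∪ Ω. -/
def CompMono21 (e : SW2 → SW) : Prop := CompMono emb2 SW2.le emb1 SW.le ([] : S) e

/-- Computable monotone function S ∪ Ω → S ∪ Ω. -/
def CompMono11 (ρ : SW → SW) : Prop := CompMono emb1 SW.le emb1 SW.le ([] : S) ρ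

/-- Km²_f(x) := min{|p₁|+|p₂| : x ⊑ f(p₁,p₂)} ∈ ℕ∞. -/
noncomputable def Km2 (f : SW2 → SW2) (x : SW2) : ℕ∞ :=
  ⨅ (p : SW2) (_ : SW2.le x (f p)), SW2.len p

/-- Km_f(x) := min{|p| : x ⊑ f(p,λ)} ∈ ℕ∞. -/
noncomputable def Km1 (f : SW2 → SW2) (x : SW2) : ℕ∞ :=
  ⨅ (p : SW) (_ : SW2.le x (f (p, SW.fin []))), SW.len p

/-- Km(x|y) := min{|p| : (x,λ) ⊑ u(p,y)} ∈ ℕ∞. -/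
noncomputable def KmCond (u : SW2 → SW2) (x y : SW) : ℕ∞ :=
  ⨅ (p : SW) (_ : SW2.le (x, SW.fin []) (u (p, y))), SW.len p

/-- Km_g(x) := min{|p| : x ⊑ g(p)} for g : S ∪ Ω → (S ∪ Ω)². -/
noncomputable def KmOf12 (g : SW → SW2) (x : SW2) : ℕ∞ :=
  ⨅ (p : SW) (_ : SW2.le x (g p)), SW.len p

/-- Optimality of a computable monotone function on (S ∪ Ω)². -/
def Optimal (u : SW2 → SW2) : Prop :=
  CompMono22 u ∧
    ∀ f : SW2 → SW2, CompMono22 f → ∃ c : ℕ, ∀ x : SW2, Km2 u x ≤ Km2 f x + (c : ℕ∞)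

/-- 2^{-n} for n ∈ ℕ∞ (with 2^{-∞} = 0), as an extended nonnegative real. -/
noncomputable def tpow (n : ℕ∞) : ℝ≥0∞ := if n = ⊤ then 0 else (2⁻¹ : ℝ≥0∞) ^ n.toNat

/-- Non-overlapping subset of (S ∪ Ω)². -/
def NonOverlapW (A : Set SW2) : Prop := A.Pairwise fun a b => SW2.cylW a ∩ SW2.cylW b = ∅

/-- Non-overlapping subset of S². -/
def NonOverlapF (A : Set (S × S)) : Prop := A.Pairwise fun a b => cyl2 a ∩ cyl2 b = ∅

/-- Condition (4): any two members of A are comparable or have disjoint cylinders. -/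
def Cond4 (A : Set (S × S)) : Prop :=
  ∀ a ∈ A, ∀ b ∈ A, Pre2 a b ∨ Pre2 b a ∨ cyl2 a ∩ cyl2 b = ∅

/-- Condition (5): relative complements of cylinders are non-overlapping unions within A. -/
def Cond5 (A : Set (S × S)) : Prop :=
  ∀ a ∈ A, ∀ b ∈ A, ∃ α ⊆ A, NonOverlapF α ∧ cyl2 a ∩ (cyl2 b)ᶜ = ⋃ z ∈ α, cyl2 z

/-- A(xinf) := {x ∈ A | x ⊏ xinf}. -/
def Asec (A : Set (S × S)) (ω : Seq × Seq) : Set (S × S) := {a ∈ A | Pre2Seq a ω}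

/-- sup_{x ∈ A} (−log P(x) − K(x)) < ∞. -/
def KmBound (P : Measure (Seq × Seq)) (K : S × S → ℕ∞) (A : Set (S × S)) : Prop :=
  ∃ c : ℝ, ∀ x ∈ A, ∀ k : ℕ, K x = (k : ℕ∞) →
    0 < P (cyl2 x) ∧ -Real.logb 2 ((P (cyl2 x)).toReal) ≤ (k : ℝ) + c

/-- sup_{x ∈ A} |log P(x) + K(x)| < ∞. -/
def KmBoundAbs (P : Measure (Seq × Seq)) (K : S × S → ℕ∞) (A : Set (S × S)) : Prop :=
  ∃ c : ℝ, ∀ x ∈ A, ∃ k : ℕ, K x = (k : ℕ∞) ∧ 0 < P (cyl2 x) ∧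
    |Real.logb 2 ((P (cyl2 x)).toReal) + (k : ℝ)| ≤ c

/-- The conditional probability P(·|yinf) is computable relative to the oracle yinf:
there is a partial computable A(x,y,k), monotone in y, approximating P(x|yinf)
to within 1/k along prefixes y of yinf. -/
def CondComputableAt (P : Measure (Seq × Seq)) (yinf : Seq) : Prop :=
  ∃ A : (S × S) × ℕ →. ℚ, Partrec A ∧
    (∀ (x y z : S) (k : ℕ) (q : ℚ), q ∈ A ((x, y), k) → y <+: z → q ∈ A ((x, z), k)) ∧
    ∀ (x : S) (k : ℕ), 0 < k → ∃ (m : ℕ) (q : ℚ), q ∈ A ((x, seqTake yinf m), k) ∧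
      |condPLim P x yinf - (q : ℝ)| < 1 / k

/-- A Martin-Löf test w.r.t. Q which is r.e. relative to the oracle yinf. -/
def RelMLTest (Q : Measure Seq) (yinf : Seq) (U : ℕ → Set S) : Prop :=
  (∃ B : (ℕ × ℕ) × S →. S, Partrec B ∧
      (∀ (i n : ℕ) (y z x : S), x ∈ B ((i, n), y) → y <+: z → x ∈ B ((i, n), z)) ∧
      ∀ n, U n = {x | ∃ i m, x ∈ B ((i, n), seqTake yinf m)}) ∧
  (∀ n, (⋃ x ∈ U (n + 1), cyl x) ⊆ ⋃ x ∈ U n, cyl x) ∧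
  ∀ n, Q (⋃ x ∈ U n, cyl x) < (2⁻¹ : ℝ≥0∞) ^ n

/-- Martin-Löf randomness w.r.t. Q relative to the oracle yinf. -/
def RelMLRandom (Q : Measure Seq) (yinf xinf : Seq) : Prop :=
  ∀ U, RelMLTest Q yinf U → xinf ∉ ⋂ n, ⋃ x ∈ U n, cyl x

/-- Likelihood ratio r(x) = Q(x)/P(x), with value 0 when P(x) = 0. -/
noncomputable def ratio (P Q : Measure Seq) (x : S) : ℝ :=
  (Q (cyl x)).toReal / (P (cyl x)).toReal

/-- P(·|yinf) f,(xinf,yinf)-effectively converges with rate g. -/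
def EffConv (P : Measure (Seq × Seq)) (xinf yinf : Seq) (f : ℕ → ℚ) (g : ℕ → ℕ) : Prop :=
  Computable g ∧ Monotone g ∧
    ∀ x y : S, PrefixSeq x xinf → PrefixSeq y yinf → g x.length ≤ y.length →
      |condP P x y / condPLim P x yinf - 1| < (f x.length : ℝ)

/-- A_g(xinf,yinf) := {(x,y) : |y| = g(|x|), (x,y) ⊏ (xinf,yinf)}. -/
def AgSec (g : ℕ → ℕ) (xinf yinf : Seq) : Set (S × S) :=
  {xy | xy.2.length = g xy.1.length ∧ PrefixSeq xy.1 xinf ∧ PrefixSeq xy.2 yinf}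

/-- A uniformly computable family of probability measures on Ω. -/
def UnifComputableFam (Pn : ℕ → Measure Seq) : Prop :=
  (∀ n, IsProbabilityMeasure (Pn n)) ∧
    ∃ A : (ℕ × S) × ℕ → ℚ, Computable A ∧
      ∀ (n : ℕ) (x : S) (k : ℕ), 0 < k →
        |(A ((n, x), k) : ℝ) - ((Pn n) (cyl x)).toReal| < 1 / k

/-- A computable sequence of reals (e.g. a computable probability on ℕ). -/
def ComputableRealSeq (α : ℕ → ℝ) : Prop :=
  ∃ a : ℕ × ℕ → ℚ, Computable a ∧ ∀ (n k : ℕ), 0 < k → |α n - (a (n, k) : ℝ)| < 1 / k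

/-- The mixture Σ_n α(n) P_n. -/
noncomputable def mixture (α : ℕ → ℝ) (Pn : ℕ → Measure Seq) : Measure Seq :=
  Measure.sum fun n => ENNReal.ofReal (α n) • Pn n

/-- The conditional probability measure P(·|y) on Ω, for a finite string y. -/
noncomputable def condMeasGivenY (P : Measure (Seq × Seq)) (y : S) : Measure Seq :=
  (P (Set.univ ×ˢ cyl y))⁻¹ • ((P.restrict (Set.univ ×ˢ cyl y)).map Prod.fst)

/-- The posterior distribution P_{Y|X}(·|x) on Ω, for a finite string x. -/
noncomputable def postMeas (P : Measure (Seq × Seq)) (x : S) : Measure Seq :=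
  (P (cyl x ×ˢ Set.univ))⁻¹ • ((P.restrict (cyl x ×ˢ Set.univ)).map Prod.snd)

open Encodable

/-! ### Computability of rational approximations -/

theorem computable_sum {β : Type} [Primcodable β] {g : β × ℕ → ℕ} (hg : Computable g)
    {f : β → ℕ} (hf : Computable f) :
    Computable fun a => ∑ i ∈ Finset.range (f a), g (a, i) := by
  have h : Computable₂ fun (a : β) (p : ℕ × ℕ) => p.2 + g (a, p.1) :=
    Primrec.nat_add.to_comp.comp (Computable.snd.comp Computable.snd)
      (hg.comp (Computable.fst.pair (Computable.fst.comp Computable.snd)))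
  refine (Computable.nat_rec hf (Computable.const 0) h).of_eq fun a => ?_
  induction f a with
  | zero => rfl
  | succ n ih => rw [Finset.sum_range_succ, ← ih]

/-- The code of a rational number given by its numerator and denominator.
`Rat.instEncodable` uses the same code. -/
def ratCode (q : ℚ) : ℕ := Nat.pair (Equiv.intEquivNat q.num) q.den

/-- `y` codes a pair of a numerator and a positive denominator without common divisor. The
coprimality is phrased with bounded quantifiers and remainders (`(a + 1) / 2` is the absolute value
of the integer with code `a`), which makes the predicate visibly primitive recursive. -/
def IsRatCode (y : ℕ) : Prop :=
  0 < y.unpair.2 ∧ ∀ d < y.unpair.2 + 1,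
    ¬ (2 ≤ d ∧ ((y.unpair.1 + 1) / 2) % d = 0 ∧ y.unpair.2 % d = 0)

instance : DecidablePred IsRatCode := fun y => by unfold IsRatCode; infer_instance

theorem primrec_isRatCode : PrimrecPred IsRatCode := by
  have h1 : PrimrecRel fun d y : ℕ =>
      ¬ (2 ≤ d ∧ ((y.unpair.1 + 1) / 2) % d = 0 ∧ y.unpair.2 % d = 0) := by
    have hd : Primrec fun p : ℕ × ℕ => p.1 := Primrec.fst
    have ha : Primrec fun p : ℕ × ℕ => (p.2.unpair.1 + 1) / 2 :=
      Primrec.nat_div.comp (Primrec.succ.comp (Primrec.fst.comp (Primrec.unpair.comp Primrec.snd)))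
        (Primrec.const 2)
    have hb : Primrec fun p : ℕ × ℕ => p.2.unpair.2 :=
      Primrec.snd.comp (Primrec.unpair.comp Primrec.snd)
    exact PrimrecPred.not (PrimrecPred.and (Primrec.nat_le.comp (Primrec.const 2) hd)
      (PrimrecPred.and
        (Primrec.eq.comp (Primrec.nat_mod.comp ha hd) (Primrec.const 0))
        (Primrec.eq.comp (Primrec.nat_mod.comp hb hd) (Primrec.const 0))))
  have h2 : Primrec fun y : ℕ => y.unpair.2 := Primrec.snd.comp Primrec.unpair
  exact PrimrecPred.and (Primrec.nat_lt.comp (Primrec.const 0) h2)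
    (h1.forall_lt.comp (Primrec.succ.comp h2) Primrec.id)

theorem coprime_iff {a b : ℕ} (hb : 0 < b) :
    a.Coprime b ↔ ∀ d < b + 1, ¬ (2 ≤ d ∧ a % d = 0 ∧ b % d = 0) := by
  constructor
  · rintro h d - ⟨h2, ha, hb'⟩
    have := Nat.dvd_gcd (Nat.dvd_of_mod_eq_zero ha) (Nat.dvd_of_mod_eq_zero hb')
    rw [h] at this
    have := Nat.le_of_dvd one_pos this
    omega
  · intro h
    by_contra hc
    have hg : Nat.gcd a b ≠ 1 := hc
    have hg0 : 0 < Nat.gcd a b := Nat.gcd_pos_of_pos_right _ hb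
    exact h (Nat.gcd a b) (Nat.lt_succ_of_le (Nat.gcd_le_right _ hb))
      ⟨by omega, Nat.mod_eq_zero_of_dvd (Nat.gcd_dvd_left _ _),
        Nat.mod_eq_zero_of_dvd (Nat.gcd_dvd_right _ _)⟩

theorem natAbs_eq_code (z : ℤ) : z.natAbs = (Equiv.intEquivNat z + 1) / 2 := by
  cases z with
  | ofNat k => change k = (2 * k + 1) / 2; omega
  | negSucc k => change k + 1 = (2 * k + 1 + 1) / 2; omega

theorem toNat_eq_code (z : ℤ) :
    z.toNat = if Equiv.intEquivNat z % 2 = 0 then Equiv.intEquivNat z / 2 else 0 := by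
  cases z with
  | ofNat k =>
    change k = if (2 * k) % 2 = 0 then (2 * k) / 2 else 0
    rw [if_pos (by omega)]; omega
  | negSucc k =>
    change 0 = if (2 * k + 1) % 2 = 0 then (2 * k + 1) / 2 else 0
    rw [if_neg (by omega)]

theorem isRatCode_iff (y : ℕ) : IsRatCode y ↔ y ∈ Set.range ratCode := by
  constructor
  · rintro ⟨hb, h⟩
    rw [← coprime_iff hb] at h
    refine ⟨⟨Equiv.intEquivNat.symm y.unpair.1, y.unpair.2, hb.ne', ?_⟩, ?_⟩
    · rw [natAbs_eq_code, Equiv.apply_symm_apply]; exact h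
    · simp [ratCode]
  · rintro ⟨q, rfl⟩
    have hb := q.den_pos
    have := (coprime_iff hb).1 q.reduced
    rw [natAbs_eq_code] at this
    simpa only [IsRatCode, ratCode, Nat.unpair_pair] using ⟨hb, this⟩

/-- The `Primcodable ℚ` instance numbers the rationals by the rank of their code among all
valid codes, so computability over `ℚ` is a statement about this rank. -/
theorem encode_rat_eq (q : ℚ) :
    @encode ℚ Primcodable.toEncodable q = Nat.count IsRatCode (ratCode q) := by
  let _ := @decidableRangeEncode ℚ Rat.instEncodable
  have h : @encode ℚ Primcodable.toEncodable q =
      Nat.count (· ∈ Set.range (@encode ℚ Rat.instEncodable)) (ratCode q) := rfl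
  rw [h]
  exact Nat.count_eq_card_filter_range _ _ |>.trans <| by
    rw [Nat.count_eq_card_filter_range]
    congr 1
    ext y
    simp only [Finset.mem_filter, isRatCode_iff]
    rfl

/-- Numerator and denominator of a rational can be computed from its encoding. -/
theorem computable_ratCode : Computable ratCode := by
  have hr : Primrec fun y => decide (IsRatCode y) := by
    obtain ⟨_, h⟩ := primrec_isRatCode
    exact h.of_eq fun a => by congr
  have hcount : Computable fun y => Nat.count IsRatCode y := by
    have : Primrec fun p : ℕ × ℕ => if IsRatCode p.2 then 1 else 0 :=
      Primrec.ite (primrec_isRatCode.comp Primrec.snd) (Primrec.const 1) (Primrec.const 0)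
    refine (computable_sum this.to_comp Computable.id).of_eq fun y => ?_
    rw [Nat.count_eq_card_filter_range, Finset.card_filter]; rfl
  have hp : Computable₂ fun (n y : ℕ) => decide (IsRatCode y) && decide (Nat.count IsRatCode y = n) := by
    have h2 : Computable₂ fun (a b : ℕ) => decide (a = b) := by
      obtain ⟨_, h⟩ := (Primrec.eq (α := ℕ))
      exact h.to_comp.of_eq fun a => by congr
    exact Primrec.and.to_comp.comp (hr.to_comp.comp Computable.snd)
      (h2.comp (hcount.comp Computable.snd) Computable.fst)
  -- The code is recovered from its rank `n` by searching for the valid code of rank `n`.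
  have hs := Partrec.rfind hp.partrec₂
  refine (hs.comp (Computable.encode (α := ℚ))).of_eq_tot fun q => ?_
  rw [Nat.mem_rfind]
  have hq : IsRatCode (ratCode q) := (isRatCode_iff _).2 ⟨q, rfl⟩
  refine ⟨by simp [hq, encode_rat_eq], fun {m} hm => ?_⟩
  simp only [PFun.coe_val, Part.mem_some_iff]
  symm
  rw [Bool.eq_false_iff]
  intro h
  simp only [Bool.and_eq_true, decide_eq_true_eq] at h
  exact hm.ne (Nat.count_injective h.1 hq (h.2.trans (encode_rat_eq q)))

/-- `⌊q * k⌋`, truncated at `0` for negative `q`. -/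
def ratScale (q : ℚ) (k : ℕ) : ℕ := q.num.toNat * k / q.den

theorem computable_ratScale : Computable₂ ratScale := by
  have h : Primrec₂ fun (y k : ℕ) =>
      (if y.unpair.1 % 2 = 0 then y.unpair.1 / 2 else 0) * k / y.unpair.2 := by
    have h1 : Primrec fun p : ℕ × ℕ => p.1.unpair.1 :=
      Primrec.fst.comp (Primrec.unpair.comp Primrec.fst)
    have h2 : Primrec fun p : ℕ × ℕ => p.1.unpair.2 :=
      Primrec.snd.comp (Primrec.unpair.comp Primrec.fst)
    exact Primrec.nat_div.comp (Primrec.nat_mul.comp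
      (Primrec.ite (Primrec.eq.comp (Primrec.nat_mod.comp h1 (Primrec.const 2)) (Primrec.const 0))
        (Primrec.nat_div.comp h1 (Primrec.const 2)) (Primrec.const 0)) Primrec.snd) h2
  refine (h.to_comp.comp (computable_ratCode.comp Computable.fst) Computable.snd).of_eq fun p => ?_
  simp only [ratCode, Nat.unpair_pair, ratScale, ← toNat_eq_code]

/-- Scaling and rounding turns rational approximations to a nonnegative real `x` with error `1 / k`
into natural-number approximations to `x * k` with error `2`. -/
theorem ratScale_approx {q : ℚ} {k : ℕ} {x : ℝ} (hk : 0 < k) (hx : 0 ≤ x)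
    (h : |x - q| < 1 / k) : |x * k - ratScale q k| < 2 := by
  have hk' : (0 : ℝ) < k := by exact_mod_cast hk
  have hd : (0 : ℝ) < q.den := by exact_mod_cast q.den_pos
  have h1 : |x * k - q * k| < 1 := by
    rw [← sub_mul, abs_mul, abs_of_pos hk']
    rwa [lt_div_iff₀ hk'] at h
  rw [abs_lt] at h1 ⊢
  rcases le_or_gt 0 q with hq | hq
  · have hn : ((q.num.toNat : ℕ) : ℝ) = q * q.den := by
      have e1 : ((q.num.toNat : ℤ)) = q.num := Int.toNat_of_nonneg (Rat.num_nonneg.2 hq)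
      have e2 := Rat.mul_den_eq_num q
      have e3 : ((q.num.toNat : ℤ) : ℚ) = q * q.den := by rw [e1, e2]
      exact_mod_cast e3
    have e : (ratScale q k : ℝ) = ⌊(q * k : ℝ)⌋₊ := by
      rw [ratScale, ← Nat.floor_div_eq_div (K := ℝ)]
      congr 2
      push_cast
      rw [hn]; field_simp
    have f1 := Nat.floor_le (a := (q * k : ℝ)) (by positivity)
    have f2 := Nat.lt_floor_add_one (q * k : ℝ)
    rw [e]; constructor <;> linarith
  · have e : ratScale q k = 0 := by
      have : q.num.toNat = 0 := Int.toNat_of_nonpos (Rat.num_neg.2 hq).le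
      simp [ratScale, this]
    have : (q : ℝ) * k < 0 := mul_neg_of_neg_of_pos (by exact_mod_cast hq) hk'
    have : 0 ≤ x * k := by positivity
    rw [e]; constructor <;> push_cast <;> linarith

/-! ### Semi-decidable predicates -/

/-- A semi-decidable (`Σ₁`) predicate, given by a decidable witness relation with a numerical
witness. -/
def Sig {β : Type} [Primcodable β] (p : β → Prop) : Prop :=
  ∃ g : β × ℕ → Bool, Computable g ∧ ∀ a, p a ↔ ∃ n, g (a, n) = true

namespace Sig
variable {β γ : Type} [Primcodable β] [Primcodable γ]

theorem of_bool {f : β → Bool} (hf : Computable f) : Sig fun a => f a = true :=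
  ⟨fun q => f q.1, hf.comp Computable.fst, fun _ => by simp⟩

theorem of_eq {p q : β → Prop} (hp : Sig p) (h : ∀ a, p a ↔ q a) : Sig q := by
  obtain ⟨g, hg, hpg⟩ := hp
  exact ⟨g, hg, fun a => (h a).symm.trans (hpg a)⟩

theorem comp {p : γ → Prop} (hp : Sig p) {f : β → γ} (hf : Computable f) :
    Sig fun a => p (f a) := by
  obtain ⟨g, hg, hpg⟩ := hp
  exact ⟨fun q => g (f q.1, q.2), hg.comp ((hf.comp Computable.fst).pair Computable.snd),
    fun a => hpg (f a)⟩

theorem of_primrecPred {p : γ → Prop} (hp : PrimrecPred p) {f : β → γ} (hf : Computable f) :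
    Sig fun a => p (f a) := by
  obtain ⟨_, h⟩ := hp
  exact ((of_bool h.to_comp).of_eq fun a => by simp).comp hf

theorem eq {f g : β → γ} (hf : Computable f) (hg : Computable g) : Sig fun a => f a = g a :=
  of_primrecPred (p := fun q : γ × γ => q.1 = q.2) Primrec.eq (hf.pair hg)

theorem lt {f g : β → ℕ} (hf : Computable f) (hg : Computable g) : Sig fun a => f a < g a :=
  of_primrecPred (p := fun q : ℕ × ℕ => q.1 < q.2) Primrec.nat_lt (hf.pair hg)

theorem and {p q : β → Prop} (hp : Sig p) (hq : Sig q) : Sig fun a => p a ∧ q a := by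
  obtain ⟨g, hg, hpg⟩ := hp
  obtain ⟨k, hk, hqk⟩ := hq
  have hu : Computable fun r : β × ℕ => r.2.unpair := Computable.unpair.comp Computable.snd
  refine ⟨fun r => g (r.1, r.2.unpair.1) && k (r.1, r.2.unpair.2),
    Primrec.and.to_comp.comp
      (hg.comp (Computable.fst.pair (Computable.fst.comp hu)))
      (hk.comp (Computable.fst.pair (Computable.snd.comp hu))), fun a => ?_⟩
  simp only [hpg, hqk, Bool.and_eq_true]
  constructor
  · rintro ⟨⟨i, hi⟩, j, hj⟩
    exact ⟨Nat.pair i j, by simpa using ⟨hi, hj⟩⟩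
  · rintro ⟨n, h1, h2⟩
    exact ⟨⟨_, h1⟩, _, h2⟩

theorem ex {p : β × γ → Prop} (hp : Sig p) : Sig fun a => ∃ b, p (a, b) := by
  obtain ⟨g, hg, hpg⟩ := hp
  have hu : Computable fun r : β × ℕ => r.2.unpair := Computable.unpair.comp Computable.snd
  have hk : Computable₂ fun (r : β × ℕ) (b : γ) => g ((r.1, b), r.2.unpair.2) :=
    hg.comp (((Computable.fst.comp Computable.fst).pair Computable.snd).pair
      (Computable.snd.comp (hu.comp Computable.fst)))
  have hc : Computable fun r : β × ℕ => (Option.casesOn (decode (α := γ) r.2.unpair.1) false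
      fun b => g ((r.1, b), r.2.unpair.2) : Bool) :=
    Computable.option_casesOn (Computable.decode.comp (Computable.fst.comp hu))
      (Computable.const false) hk
  refine ⟨_, hc, fun a => ?_⟩
  constructor
  · rintro ⟨b, hb⟩
    obtain ⟨n, hn⟩ := (hpg _).1 hb
    exact ⟨Nat.pair (encode b) n, by simpa using hn⟩
  · rintro ⟨n, hn⟩
    simp only at hn
    cases hd : decode (α := γ) n.unpair.1 with
    | none => simp [hd] at hn
    | some b =>
      rw [hd] at hn
      exact ⟨b, (hpg _).2 ⟨_, hn⟩⟩

/-- Bounded universal quantification preserves semi-decidability: the finitely many witnesses are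
collected in one list, and the sum counts the failures. -/
theorem ball {p : β × ℕ → Prop} (hp : Sig p) {f : β → ℕ} (hf : Computable f) :
    Sig fun a => ∀ i < f a, p (a, i) := by
  obtain ⟨g, hg, hpg⟩ := hp
  have hc : Computable fun r : (β × List ℕ) × ℕ =>
      cond (g ((r.1.1, r.2), (r.1.2[r.2]?).getD 0)) 0 1 :=
    Computable.cond (hg.comp (((Computable.fst.comp Computable.fst).pair Computable.snd).pair
      (Primrec.option_getD.to_comp.comp
        (Computable.list_getElem?.comp (Computable.snd.comp Computable.fst) Computable.snd)
        (Computable.const 0)))) (Computable.const 0) (Computable.const 1)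
  have hs := computable_sum hc (hf.comp Computable.fst)
  refine (ex (eq hs (Computable.const 0))).of_eq fun a => ?_
  change (∃ w : List ℕ, ∑ i ∈ Finset.range (f a), cond (g ((a, i), (w[i]?).getD 0)) 0 1 = 0) ↔ _
  simp only [Finset.sum_eq_zero_iff, Finset.mem_range]
  constructor
  · rintro ⟨w, hw⟩ i hi
    have := hw i hi
    refine (hpg _).2 ⟨(w[i]?).getD 0, ?_⟩
    cases hv : g ((a, i), (w[i]?).getD 0) with
    | true => rfl
    | false =>
      rw [hv] at this
      exact absurd this one_ne_zero
  · intro h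
    have h' : ∀ i, ∃ n, i < f a → g ((a, i), n) = true := fun i => by
      by_cases hi : i < f a
      · obtain ⟨n, hn⟩ := (hpg _).1 (h i hi)
        exact ⟨n, fun _ => hn⟩
      · exact ⟨0, fun h => absurd h hi⟩
    choose w hw using h'
    refine ⟨(List.range (f a)).map w, fun i hi => ?_⟩
    simp [hi, hw i hi]

theorem reSet {p : β → Prop} (hp : Sig p) : RESet {a | p a} := by
  obtain ⟨g, hg, hpg⟩ := hp
  refine ⟨fun n => (decode (α := β × ℕ) n).bind fun q => cond (g q) (some q.1) none, ?_, ?_⟩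
  · exact Computable.option_bind Computable.decode
      (Computable.cond (hg.comp Computable.snd)
        (Computable.option_some.comp (Computable.fst.comp Computable.snd)) (Computable.const none))
  · ext a
    simp only [Set.mem_ofPred_eq, hpg]
    constructor
    · rintro ⟨n, hn⟩
      exact ⟨encode (a, n), by simp [hn]⟩
    · rintro ⟨n, hn⟩
      rw [Option.bind_eq_some_iff] at hn
      obtain ⟨q, -, hq⟩ := hn
      cases hgq : g q with
      | false => simp [hgq] at hq
      | true =>
        simp only [hgq, cond_true, Option.some.injEq] at hq
        exact ⟨q.2, by rw [← hq]; exact hgq⟩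

end Sig

/-! ### Enumeration of all r.e. sets -/

/-- A computable enumeration of all r.e. subsets of `ℕ × S`, sliced by their first coordinate: `c` is
the code of a program that enumerates the set, and step `s` encodes an input to this program together
with a bound on its running time. -/
theorem exists_universal : ∃ h : (ℕ × ℕ) × ℕ → Option S, Computable h ∧
    ∀ U : Set (ℕ × S), RESet U → ∃ c, ∀ m x, (m, x) ∈ U ↔ ∃ s, h ((c, m), s) = some x := by
  refine ⟨fun r => ((Nat.Partrec.Code.evaln r.2.unpair.2 (Denumerable.ofNat Nat.Partrec.Code r.1.1)
      r.2.unpair.1).bind fun v => (decode (α := Option (ℕ × S)) v).bind fun o =>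
        o.bind fun q => bif decide (q.1 = r.1.2) then some q.2 else none), ?_, ?_⟩
  · have hu : Computable fun r : (ℕ × ℕ) × ℕ => r.2.unpair :=
      Computable.unpair.comp Computable.snd
    have hev : Computable fun r : (ℕ × ℕ) × ℕ => Nat.Partrec.Code.evaln r.2.unpair.2
        (Denumerable.ofNat Nat.Partrec.Code r.1.1) r.2.unpair.1 :=
      Nat.Partrec.Code.primrec_evaln.to_comp.comp
        (((Computable.snd.comp hu).pair ((Computable.ofNat Nat.Partrec.Code).comp
          (Computable.fst.comp Computable.fst))).pair (Computable.fst.comp hu))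
    have heq : Computable₂ fun a b : ℕ => decide (a = b) := by
      obtain ⟨_, h⟩ := (Primrec.eq (α := ℕ))
      exact h.to_comp.of_eq fun a => by congr
    have h3 : Computable₂ fun (m : ℕ) (q : ℕ × S) =>
        bif decide (q.1 = m) then some q.2 else none :=
      Computable.cond (heq.comp (Computable.fst.comp Computable.snd) Computable.fst)
        (Computable.option_some.comp (Computable.snd.comp Computable.snd)) (Computable.const none)
    have h2 : Computable₂ fun (m : ℕ) (o : Option (ℕ × S)) =>
        o.bind fun q => bif decide (q.1 = m) then some q.2 else none :=
      Computable.option_bind Computable.snd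
        (h3.comp (Computable.fst.comp Computable.fst) Computable.snd)
    have h1 : Computable₂ fun (m v : ℕ) => (decode (α := Option (ℕ × S)) v).bind fun o =>
        o.bind fun q => bif decide (q.1 = m) then some q.2 else none :=
      Computable.option_bind (Computable.decode.comp Computable.snd)
        (h2.comp (Computable.fst.comp Computable.fst) Computable.snd)
    exact Computable.option_bind hev
      (h1.comp (Computable.snd.comp (Computable.fst.comp Computable.fst)) Computable.snd)
  · rintro U ⟨f, hf, rfl⟩
    have hf' : Nat.Partrec fun n => Part.some (encode (f n)) := by
      have := Partrec.nat_iff.1 (Computable.encode.comp hf).partrec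
      exact this
    obtain ⟨c, hc⟩ := Nat.Partrec.Code.exists_code.1 hf'
    refine ⟨encode c, fun m x => ?_⟩
    simp only [Set.mem_ofPred_eq, Denumerable.ofNat_encode]
    have key : ∀ i v, (∃ t, Nat.Partrec.Code.evaln t c i = some v) ↔ v = encode (f i) := by
      intro i v
      have := Nat.Partrec.Code.evaln_complete (c := c) (n := i) (x := v)
      rw [hc] at this
      simpa using this.symm
    constructor
    · rintro ⟨i, hi⟩
      obtain ⟨t, ht⟩ := (key i _).2 rfl
      exact ⟨Nat.pair i t, by simp [ht, hi]⟩
    · rintro ⟨s, hs⟩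
      refine ⟨s.unpair.1, ?_⟩
      rw [Option.bind_eq_some_iff] at hs
      obtain ⟨v, hv, hs⟩ := hs
      rw [(key _ _).1 ⟨_, hv⟩] at hs
      simp only [encodek, Option.bind_some, Option.bind_eq_some_iff] at hs
      obtain ⟨⟨m', x'⟩, hq, hs⟩ := hs
      by_cases hm : m' = m
      · subst hm
        simp only [decide_true, cond_true, Option.some.injEq] at hs
        rw [hq, hs]
      · simp [hm] at hs

/-! ### Prefixes and cylinders -/

theorem prefixSeq_iff {x : S} {ω : Seq} : PrefixSeq x ω ↔ x = seqTake ω x.length := by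
  constructor
  · intro h
    refine List.ext_getElem (by simp [seqTake]) fun i h1 h2 => ?_
    simpa [seqTake] using h ⟨i, h1⟩
  · intro h i
    have := congrArg (fun l => l[(i : ℕ)]?) h
    simpa [seqTake] using this

theorem seqTake_prefix (ω : Seq) {a b : ℕ} (h : a ≤ b) : seqTake ω a <+: seqTake ω b := by
  rw [List.prefix_iff_eq_take]
  refine List.ext_getElem (by simp [seqTake, h]) fun i h1 h2 => ?_
  simp [seqTake]

theorem prefixSeq_seqTake (ω : Seq) (L : ℕ) : PrefixSeq (seqTake ω L) ω := by
  rw [prefixSeq_iff]; simp [seqTake]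

theorem PrefixSeq.prefix_seqTake {x : S} {ω : Seq} (h : PrefixSeq x ω) {L : ℕ}
    (hL : x.length ≤ L) : x <+: seqTake ω L := by
  rw [prefixSeq_iff.1 h]; exact seqTake_prefix ω hL

theorem PrefixSeq.of_prefix {x y : S} {ω : Seq} (h : PrefixSeq x ω) (hy : y <+: x) :
    PrefixSeq y ω := by
  obtain ⟨z, rfl⟩ := hy
  intro i
  have := h ⟨i, by simp; omega⟩
  simpa [List.getElem_append_left] using this

theorem measurableSet_cyl (x : S) : MeasurableSet (cyl x) := by
  have : cyl x = ⋂ i : Fin x.length, (fun ω : Seq => ω i) ⁻¹' {x.get i} := by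
    ext ω
    simp only [cyl, PrefixSeq, Set.mem_ofPred_eq, Set.mem_iInter, Set.mem_preimage,
      Set.mem_singleton_iff, eq_comm]
  rw [this]
  exact MeasurableSet.iInter fun i => measurable_pi_apply _ (measurableSet_singleton _)

theorem sum_range_getD (f : S → ℝ) (G : List S) :
    ∑ j ∈ Finset.range G.length, f ((G[j]?).getD []) = (G.map f).sum := by
  induction G with
  | nil => simp
  | cons y G ih =>
    rw [List.length_cons, Finset.sum_range_succ', List.map_cons, List.sum_cons, ← ih, add_comm]
    simp

/-! ### Semi-decidability of measure bounds -/

/-- A finite union of cylinders has a finite cover by cylinders (those of its prefix-minimal strings)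
whose measures add up to at most the measure of the union. -/
theorem exists_disjoint_cover (P : Measure Seq) [IsProbabilityMeasure P] (F : Finset S) :
    ∃ G : List S, (∀ x ∈ F, ∃ y ∈ G, y <+: x) ∧
      (G.map fun y => (P (cyl y)).toReal).sum ≤ (P (⋃ x ∈ F, cyl x)).toReal := by
  classical
  let M := F.filter fun x => ∀ y ∈ F, y <+: x → y = x
  refine ⟨M.toList, fun x hx => ?_, ?_⟩
  · obtain ⟨y, hy, hmin⟩ := Finset.exists_min_image (F.filter fun y => y <+: x) List.length
      ⟨x, by simp [hx]⟩
    rw [Finset.mem_filter] at hy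
    refine ⟨y, ?_, hy.2⟩
    rw [Finset.mem_toList, Finset.mem_filter]
    refine ⟨hy.1, fun z hz hzy => ?_⟩
    exact hzy.eq_of_length_le (hmin z (by simp [hz, hzy.trans hy.2]))
  · rw [Finset.sum_map_toList]
    have hd : Set.PairwiseDisjoint (M : Set S) cyl := by
      intro x hx y hy hxy
      rw [Function.onFun, Set.disjoint_left]
      intro ω h1 h2
      simp only [M, Finset.coe_filter, Set.mem_ofPred_eq] at hx hy
      rcases le_total x.length y.length with h | h
      · apply hxy
        apply hy.2 x hx.1
        rw [prefixSeq_iff.1 h2]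
        exact PrefixSeq.prefix_seqTake h1 h
      · apply hxy.symm
        apply hx.2 y hy.1
        rw [prefixSeq_iff.1 h1]
        exact PrefixSeq.prefix_seqTake h2 h
    rw [← ENNReal.toReal_sum (fun _ _ => measure_ne_top _ _),
      ← measure_biUnion_finset hd fun x _ => measurableSet_cyl x]
    refine ENNReal.toReal_mono (measure_ne_top _ _) (measure_mono ?_)
    exact Set.biUnion_subset_biUnion_left fun x hx => (Finset.mem_filter.1 hx).1

/-- Natural-number approximations to the measures of cylinders, uniformly along the family. -/
theorem exists_cyl_approx {Pn : ℕ → Measure Seq} (hPn : UnifComputableFam Pn) :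
    ∃ b : (ℕ × S) × ℕ → ℕ, Computable b ∧ ∀ n x k, 0 < k →
      |(Pn n (cyl x)).toReal * k - b ((n, x), k)| < 2 := by
  obtain ⟨-, A, hA, h⟩ := hPn
  refine ⟨fun r => ratScale (A r) r.2, computable_ratScale.comp hA Computable.snd,
    fun n x k hk => ratScale_approx hk ENNReal.toReal_nonneg ?_⟩
  rw [abs_sub_comm]
  exact h n x k hk

/-- Natural-number approximations to the weights. -/
theorem exists_weight_approx {α : ℕ → ℝ} (hα : ComputableRealSeq α) (hpos : ∀ n, 0 < α n) :
    ∃ a : ℕ × ℕ → ℕ, Computable a ∧ ∀ n k, 0 < k → |α n * k - a (n, k)| < 2 := by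
  obtain ⟨A, hA, h⟩ := hα
  exact ⟨fun r => ratScale (A r) r.2, computable_ratScale.comp hA Computable.snd,
    fun n k hk => ratScale_approx hk (hpos n).le (h n k hk)⟩

theorem inv_two_pow_eq (m : ℕ) : ((2⁻¹ : ℝ≥0∞) ^ m) = ENNReal.ofReal ((2 ^ m)⁻¹) := by
  rw [ENNReal.ofReal_inv_of_pos (by positivity), ENNReal.ofReal_pow (by norm_num),
    ENNReal.inv_pow]
  simp

/-- The open set enumerated up to step `s` by level `m` of the test with index `c`, where
`h ((c, m), i)` is the string, if any, enumerated at step `i`. The bound is `i ≤ s`, so that a string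
found at step `s` already counts. -/
def stage (h : (ℕ × ℕ) × ℕ → Option S) (c m s : ℕ) : Set Seq :=
  {ω | ∃ i < s + 1, ∃ x, h ((c, m), i) = some x ∧ ω ∈ cyl x}

/-- The measure of a stage is below `2⁻ᵐ` iff this has a finite certificate: a list `G` of strings
whose cylinders cover the stage, and a precision `k` at which the approximate measures of these
cylinders, plus their errors, have a sum below `2⁻ᵐ`. -/
theorem stage_lt_iff {P : Measure Seq} [IsProbabilityMeasure P] {b : S → ℕ → ℕ}
    (hb : ∀ x k, 0 < k → |(P (cyl x)).toReal * k - b x k| < 2)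
    (h : (ℕ × ℕ) × ℕ → Option S) (c m s : ℕ) :
    (∃ G : List S, ∃ k : ℕ,
      (∀ i < s + 1, ∃ j : ℕ, ∃ z : S, h ((c, m), i) = none ∨
        h ((c, m), i) = (G[j]?).map fun y => y ++ z) ∧
      (∑ j ∈ Finset.range G.length, b ((G[j]?).getD []) k + 2 * G.length) * 2 ^ m < k) ↔
    P (stage h c m s) < (2⁻¹ : ℝ≥0∞) ^ m := by
  have h2' : (0 : ℝ) < 2 ^ m := by positivity
  rw [inv_two_pow_eq, ENNReal.lt_ofReal_iff_toReal_lt (measure_ne_top _ _)]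
  constructor
  · rintro ⟨G, k, hG, hk⟩
    have hk0 : 0 < k := by omega
    have hk0' : (0 : ℝ) < k := by exact_mod_cast hk0
    have hsub : stage h c m s ⊆ ⋃ j ∈ Finset.range G.length, cyl ((G[j]?).getD []) := by
      rintro ω ⟨i, hi, x, hx, hω⟩
      obtain ⟨j, z, hz⟩ := hG i hi
      rw [hx] at hz
      rcases hz with hz | hz
      · cases hz
      obtain ⟨y, hy, hyx⟩ := Option.map_eq_some_iff.1 hz.symm
      simp only [Set.mem_iUnion, Finset.mem_range]
      refine ⟨j, (List.getElem?_eq_some_iff.1 hy).1, ?_⟩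
      rw [hy]
      exact PrefixSeq.of_prefix hω ⟨z, hyx⟩
    have h3 : (P (stage h c m s)).toReal ≤
        ∑ j ∈ Finset.range G.length, (P (cyl ((G[j]?).getD []))).toReal :=
      (ENNReal.toReal_mono (measure_ne_top _ _) (measure_mono hsub)).trans
        (measureReal_biUnion_finset_le _ _)
    have h4 : (∑ j ∈ Finset.range G.length, (P (cyl ((G[j]?).getD []))).toReal) * k ≤
        ∑ j ∈ Finset.range G.length, (b ((G[j]?).getD []) k : ℝ) + 2 * G.length := by
      rw [Finset.sum_mul]
      calc _ ≤ ∑ j ∈ Finset.range G.length, ((b ((G[j]?).getD []) k : ℝ) + 2) :=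
            Finset.sum_le_sum fun j _ => by
              have := (abs_lt.1 (hb ((G[j]?).getD []) k hk0)).2
              linarith
        _ = _ := by rw [Finset.sum_add_distrib]; simp [mul_comm]
    have h5 : (∑ j ∈ Finset.range G.length, (b ((G[j]?).getD []) k : ℝ) + 2 * G.length) * 2 ^ m
        < k := by exact_mod_cast hk
    rw [← one_div, lt_div_iff₀ h2']
    have h6 : (P (stage h c m s)).toReal * 2 ^ m * k < 1 * k := by
      calc (P (stage h c m s)).toReal * 2 ^ m * k
          = (P (stage h c m s)).toReal * k * 2 ^ m := by ring
        _ ≤ _ := mul_le_mul_of_nonneg_right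
            ((mul_le_mul_of_nonneg_right h3 hk0'.le).trans h4) h2'.le
        _ < 1 * k := by rw [one_mul]; exact h5
    exact lt_of_mul_lt_mul_right h6 hk0'.le
  · intro hlt
    classical
    let F : Finset S := (Finset.range (s + 1)).biUnion fun i => (h ((c, m), i)).toFinset
    have hF : ∀ x, x ∈ F ↔ ∃ i < s + 1, h ((c, m), i) = some x := by
      intro x; simp [F]
    obtain ⟨G, hcov, hsum⟩ := exists_disjoint_cover P F
    have hst : (⋃ x ∈ F, cyl x) = stage h c m s := by
      ext ω
      simp only [Set.mem_iUnion, hF, stage, Set.mem_ofPred_eq, exists_prop]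
      constructor
      · rintro ⟨x, ⟨i, hi, hx⟩, hω⟩; exact ⟨i, hi, x, hx, hω⟩
      · rintro ⟨i, hi, x, hx, hω⟩; exact ⟨x, ⟨i, hi, hx⟩, hω⟩
    rw [hst, ← sum_range_getD] at hsum
    set T := ∑ j ∈ Finset.range G.length, (P (cyl ((G[j]?).getD []))).toReal with hT
    have hδ : 0 < 1 - T * 2 ^ m := by
      have := hsum.trans_lt hlt
      rw [← one_div, lt_div_iff₀ h2'] at this
      linarith
    -- `b` is off by at most `2` per string, and this error is counted once more in the certificate.
    obtain ⟨k, hk⟩ := exists_nat_gt (4 * G.length * 2 ^ m / (1 - T * 2 ^ m))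
    have hk0' : (0 : ℝ) < k := lt_of_le_of_lt (by positivity) hk
    have hk0 : 0 < k := by exact_mod_cast hk0'
    refine ⟨G, k, fun i hi => ?_, ?_⟩
    · cases hx : h ((c, m), i) with
      | none => exact ⟨0, [], Or.inl rfl⟩
      | some x =>
        obtain ⟨y, hy, z, hz⟩ := hcov x ((hF x).2 ⟨i, hi, hx⟩)
        obtain ⟨j, hj⟩ := List.mem_iff_getElem?.1 hy
        exact ⟨j, z, Or.inr (by rw [hj, Option.map_some, hz])⟩
    · have h4 : ∑ j ∈ Finset.range G.length, (b ((G[j]?).getD []) k : ℝ) ≤ T * k + 2 * G.length := by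
        rw [hT, Finset.sum_mul]
        calc _ ≤ ∑ j ∈ Finset.range G.length, ((P (cyl ((G[j]?).getD []))).toReal * k + 2) :=
              Finset.sum_le_sum fun j _ => by
                have := (abs_lt.1 (hb ((G[j]?).getD []) k hk0)).1
                linarith
          _ = _ := by rw [Finset.sum_add_distrib]; simp [mul_comm]
      rw [div_lt_iff₀ hδ] at hk
      have h5 : (∑ j ∈ Finset.range G.length, (b ((G[j]?).getD []) k : ℝ) + 2 * G.length) * 2 ^ m
          < k := by
        calc _ ≤ (T * k + 2 * G.length + 2 * G.length) * 2 ^ m := by gcongr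
          _ < k := by nlinarith
      exact_mod_cast h5

theorem primrec_two_pow : Primrec fun m : ℕ => 2 ^ m := by
  have h : Primrec₂ fun (_ : ℕ) (p : ℕ × ℕ) => p.2 * 2 :=
    Primrec.nat_mul.comp (Primrec.snd.comp Primrec.snd) (Primrec.const 2)
  refine (Primrec.nat_rec' Primrec.id (Primrec.const 1) h).of_eq fun m => ?_
  induction m with
  | zero => rfl
  | succ m ih => rw [pow_succ, ← ih]; rfl

theorem sig_cover {h : (ℕ × ℕ) × ℕ → Option S} (hh : Computable h) :
    Sig fun q : ((ℕ × ℕ) × ℕ) × List S => ∀ i < q.1.2 + 1, ∃ j : ℕ, ∃ z : S,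
      h (q.1.1, i) = none ∨ h (q.1.1, i) = (q.2[j]?).map fun y => y ++ z := by
  have hp : PrimrecPred fun o : Option S × Option S => o.1 = none ∨ o.1 = o.2 :=
    PrimrecPred.or (Primrec.eq.comp Primrec.fst (Primrec.const none)) Primrec.eq
  have h0 : Computable fun q : (((((ℕ × ℕ) × ℕ) × List S) × ℕ) × ℕ) × S => q.1.1.1 :=
    Computable.fst.comp (Computable.fst.comp Computable.fst)
  have h1 : Computable fun q : (((((ℕ × ℕ) × ℕ) × List S) × ℕ) × ℕ) × S =>
      h (q.1.1.1.1.1, q.1.1.2) :=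
    hh.comp ((Computable.fst.comp (Computable.fst.comp h0)).pair
      (Computable.snd.comp (Computable.fst.comp Computable.fst)))
  have h2 : Computable fun q : (((((ℕ × ℕ) × ℕ) × List S) × ℕ) × ℕ) × S =>
      q.1.1.1.2[q.1.2]? :=
    Computable.list_getElem?.comp (Computable.snd.comp h0) (Computable.snd.comp Computable.fst)
  have h3 : Computable₂ fun (q : (((((ℕ × ℕ) × ℕ) × List S) × ℕ) × ℕ) × S) (y : S) =>
      y ++ q.2 :=
    Computable.list_append.comp Computable.snd (Computable.snd.comp Computable.fst)
  exact Sig.ball (Sig.ex (Sig.ex (Sig.of_primrecPred hp (h1.pair (Computable.option_map h2 h3)))))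
    (Computable.succ.comp (Computable.snd.comp Computable.fst))

theorem sig_stage {Pn : ℕ → Measure Seq} (hPn : UnifComputableFam Pn)
    {h : (ℕ × ℕ) × ℕ → Option S} (hh : Computable h) :
    Sig fun r : (ℕ × (ℕ × ℕ)) × ℕ =>
      Pn r.1.1 (stage h r.1.2.1 r.1.2.2 r.2) < (2⁻¹ : ℝ≥0∞) ^ r.1.2.2 := by
  obtain ⟨b, hb, hbP⟩ := exists_cyl_approx hPn
  have hcover : Sig fun q : (((ℕ × (ℕ × ℕ)) × ℕ) × List S) × ℕ =>
      ∀ i < q.1.1.2 + 1, ∃ j : ℕ, ∃ z : S, h (q.1.1.1.2, i) = none ∨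
        h (q.1.1.1.2, i) = (q.1.2[j]?).map fun y => y ++ z :=
    (sig_cover hh).comp (f := fun q : (((ℕ × (ℕ × ℕ)) × ℕ) × List S) × ℕ =>
        ((q.1.1.1.2, q.1.1.2), q.1.2))
      (((Computable.snd.comp (Computable.fst.comp (Computable.fst.comp Computable.fst))).pair
        (Computable.snd.comp (Computable.fst.comp Computable.fst))).pair
        (Computable.snd.comp Computable.fst))
  have hlen : Computable fun q : (((ℕ × (ℕ × ℕ)) × ℕ) × List S) × ℕ => q.1.2.length :=
    Computable.list_length.comp (Computable.snd.comp Computable.fst)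
  have hget : Computable fun q : ((((ℕ × (ℕ × ℕ)) × ℕ) × List S) × ℕ) × ℕ =>
      (q.1.1.2[q.2]?).getD [] :=
    Primrec.option_getD.to_comp.comp (Computable.list_getElem?.comp
      (Computable.snd.comp (Computable.fst.comp Computable.fst)) Computable.snd)
      (Computable.const [])
  have hterm : Computable fun q : ((((ℕ × (ℕ × ℕ)) × ℕ) × List S) × ℕ) × ℕ =>
      b ((q.1.1.1.1.1, (q.1.1.2[q.2]?).getD []), q.1.2) :=
    hb.comp (((Computable.fst.comp (Computable.fst.comp (Computable.fst.comp
      (Computable.fst.comp Computable.fst)))).pair hget).pair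
        (Computable.snd.comp Computable.fst))
  have hsum := computable_sum hterm hlen
  have hpow : Computable fun q : (((ℕ × (ℕ × ℕ)) × ℕ) × List S) × ℕ => 2 ^ q.1.1.1.2.2 :=
    primrec_two_pow.to_comp.comp (Computable.snd.comp (Computable.snd.comp
      (Computable.fst.comp (Computable.fst.comp Computable.fst))))
  have hlhs : Computable fun q : (((ℕ × (ℕ × ℕ)) × ℕ) × List S) × ℕ =>
      (∑ j ∈ Finset.range q.1.2.length, b ((q.1.1.1.1, (q.1.2[j]?).getD []), q.2) +
        2 * q.1.2.length) * 2 ^ q.1.1.1.2.2 :=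
    Primrec.nat_mul.to_comp.comp (Primrec.nat_add.to_comp.comp hsum
      (Primrec.nat_mul.to_comp.comp (Computable.const 2) hlen)) hpow
  refine (Sig.ex (Sig.ex (hcover.and (Sig.lt hlhs Computable.snd)))).of_eq fun r => ?_
  have := hPn.1 r.1.1
  exact stage_lt_iff (b := fun x k => b ((r.1.1, x), k)) (hbP r.1.1) h r.1.2.1 r.1.2.2 r.2

/-! ### A universal test for each component -/

/-- `x` is enumerated into level `m` of the set with index `c` at a moment when this level still has
`Pn n`-measure below `2⁻ᵐ`. The accepted strings of level `m` thus form the level trimmed to be small,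
and nothing is lost if the level is small anyway. -/
def Acc (Pn : ℕ → Measure Seq) (h : (ℕ × ℕ) × ℕ → Option S) (n c m : ℕ) (x : S) : Prop :=
  ∃ s, h ((c, m), s) = some x ∧ Pn n (stage h c m s) < (2⁻¹ : ℝ≥0∞) ^ m

theorem sig_acc {Pn : ℕ → Measure Seq} (hPn : UnifComputableFam Pn)
    {h : (ℕ × ℕ) × ℕ → Option S} (hh : Computable h) :
    Sig fun r : (ℕ × (ℕ × ℕ)) × S => Acc Pn h r.1.1 r.1.2.1 r.1.2.2 r.2 := by
  have h1 : Computable fun q : ((ℕ × (ℕ × ℕ)) × S) × ℕ => h (q.1.1.2, q.2) :=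
    hh.comp ((Computable.snd.comp (Computable.fst.comp Computable.fst)).pair Computable.snd)
  have h2 : Computable fun q : ((ℕ × (ℕ × ℕ)) × S) × ℕ => some q.1.2 :=
    Computable.option_some.comp (Computable.snd.comp Computable.fst)
  have h3 := (sig_stage hPn hh).comp (f := fun q : ((ℕ × (ℕ × ℕ)) × S) × ℕ => (q.1.1, q.2))
    ((Computable.fst.comp Computable.fst).pair Computable.snd)
  exact Sig.ex ((Sig.eq h1 h2).and h3)

/-- The open set covered by the accepted strings. -/
def accOpen (Pn : ℕ → Measure Seq) (h : (ℕ × ℕ) × ℕ → Option S) (n c m : ℕ) : Set Seq :=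
  {ω | ∃ x, Acc Pn h n c m x ∧ ω ∈ cyl x}

theorem measurableSet_accOpen (Pn : ℕ → Measure Seq) (h : (ℕ × ℕ) × ℕ → Option S) (n c m : ℕ) :
    MeasurableSet (accOpen Pn h n c m) := by
  have : accOpen Pn h n c m = ⋃ x ∈ {x | Acc Pn h n c m x}, cyl x := by
    ext ω; simp [accOpen]
  rw [this]
  exact MeasurableSet.biUnion (Set.to_countable _) fun x _ => measurableSet_cyl x

theorem stage_mono (h : (ℕ × ℕ) × ℕ → Option S) (c m : ℕ) : Monotone (stage h c m) := by
  rintro s t hst ω ⟨i, hi, x, hx⟩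
  exact ⟨i, by omega, x, hx⟩

theorem measure_accOpen_le (Pn : ℕ → Measure Seq) (h : (ℕ × ℕ) × ℕ → Option S) (n c m : ℕ) :
    Pn n (accOpen Pn h n c m) ≤ (2⁻¹ : ℝ≥0∞) ^ m := by
  -- The stages that pass the measure check increase, so their union has the supremal measure.
  have hsub : accOpen Pn h n c m ⊆
      ⋃ s : {s // Pn n (stage h c m s) < (2⁻¹ : ℝ≥0∞) ^ m}, stage h c m s := by
    rintro ω ⟨x, ⟨s, hs, hlt⟩, hω⟩
    exact Set.mem_iUnion.2 ⟨⟨s, hlt⟩, s, Nat.lt_succ_self s, x, hs, hω⟩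
  refine (measure_mono hsub).trans ?_
  have hmono : Monotone fun s : {s // Pn n (stage h c m s) < (2⁻¹ : ℝ≥0∞) ^ m} =>
      stage h c m s := fun s t hst => stage_mono h c m hst
  rw [hmono.measure_iUnion]
  exact iSup_le fun s => s.2.le

/-- Level `j` of the universal test for `Pn n`: level `j + c + 3` of the trimmed test with index
`c`, united over all `c`. -/
def levelOpen (Pn : ℕ → Measure Seq) (h : (ℕ × ℕ) × ℕ → Option S) (n j : ℕ) : Set Seq :=
  ⋃ c, accOpen Pn h n c (j + c + 3)

theorem measurableSet_levelOpen (Pn : ℕ → Measure Seq) (h : (ℕ × ℕ) × ℕ → Option S) (n j : ℕ) :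
    MeasurableSet (levelOpen Pn h n j) :=
  MeasurableSet.iUnion fun _ => measurableSet_accOpen Pn h _ _ _

theorem measure_levelOpen_le (Pn : ℕ → Measure Seq) (h : (ℕ × ℕ) × ℕ → Option S) (n j : ℕ) :
    Pn n (levelOpen Pn h n j) ≤ (2⁻¹ : ℝ≥0∞) ^ (j + 2) := by
  refine (measure_iUnion_le _).trans ?_
  calc ∑' c, Pn n (accOpen Pn h n c (j + c + 3))
      ≤ ∑' c, (2⁻¹ : ℝ≥0∞) ^ (j + 2) * 2⁻¹ ^ (c + 1) := ENNReal.tsum_le_tsum fun c => by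
        refine (measure_accOpen_le Pn h n c _).trans_eq ?_
        rw [← pow_add]; congr 1; omega
    _ = (2⁻¹ : ℝ≥0∞) ^ (j + 2) := by
        rw [ENNReal.tsum_mul_left, ENNReal.tsum_geometric_add_one, ENNReal.one_sub_inv_two, inv_inv,
          ENNReal.inv_mul_cancel (by simp) (by simp), mul_one]

/-! ### Tails of the weights and the measure of the combined levels -/

/-- The first `N` weights add up to more than `1 - 2^{-(j+2)}`. -/
def Tail (α : ℕ → ℝ) (j N : ℕ) : Prop :=
  1 < ∑ n ∈ Finset.range N, α n + ((2 : ℝ) ^ (j + 2))⁻¹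

/-- `Tail` has a finite certificate in terms of the approximate weights, since it is a strict
inequality. -/
theorem tail_iff {α : ℕ → ℝ} {a : ℕ × ℕ → ℕ}
    (ha : ∀ n k, 0 < k → |α n * k - a (n, k)| < 2) (j N : ℕ) :
    (∃ k, 0 < k ∧ k * 2 ^ (j + 2) + 2 * N * 2 ^ (j + 2) <
      (∑ n ∈ Finset.range N, a (n, k)) * 2 ^ (j + 2) + k) ↔ Tail α j N := by
  have hp : (0 : ℝ) < 2 ^ (j + 2) := by positivity
  have hs : ∀ k, 0 < k → |(∑ n ∈ Finset.range N, α n) * k -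
      ∑ n ∈ Finset.range N, (a (n, k) : ℝ)| ≤ 2 * N := fun k hk => by
    rw [Finset.sum_mul, ← Finset.sum_sub_distrib]
    refine (Finset.abs_sum_le_sum_abs _ _).trans
      ((Finset.sum_le_sum fun n _ => (ha n k hk).le).trans ?_)
    simp [mul_comm]
  unfold Tail
  set A := ∑ n ∈ Finset.range N, α n
  set p : ℝ := 2 ^ (j + 2) with hpdef
  have hpp : p⁻¹ * p = 1 := inv_mul_cancel₀ hp.ne'
  constructor
  · rintro ⟨k, hk, hlt⟩
    have hk' : (0 : ℝ) < k := by exact_mod_cast hk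
    have h1 := (abs_le.1 (hs k hk)).1
    have h2 : (k : ℝ) * p + 2 * N * p < (∑ n ∈ Finset.range N, (a (n, k) : ℝ)) * p + k := by
      rw [hpdef]; exact_mod_cast hlt
    have h3 := mul_le_mul_of_nonneg_right h1 hp.le
    have h4 : 1 * (k * p) < (A + p⁻¹) * (k * p) := by
      have : (A + p⁻¹) * (k * p) = A * k * p + k := by rw [add_mul]; linear_combination k * hpp
      rw [this]; linarith
    exact lt_of_mul_lt_mul_right h4 (by positivity)
  · intro hlt
    obtain ⟨k, hk⟩ := exists_nat_gt (4 * N / (A + p⁻¹ - 1))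
    have hδ : 0 < A + p⁻¹ - 1 := by linarith
    have hk' : (0 : ℝ) < k := lt_of_le_of_lt (by positivity) hk
    have hk0 : 0 < k := by exact_mod_cast hk'
    rw [div_lt_iff₀ hδ] at hk
    have h1 := (abs_le.1 (hs k hk0)).2
    have h3 := mul_le_mul_of_nonneg_right h1 hp.le
    have h4 := mul_lt_mul_of_pos_right hk hp
    have h2 : (k : ℝ) * p + 2 * N * p < (∑ n ∈ Finset.range N, (a (n, k) : ℝ)) * p + k := by
      have : (k : ℝ) * (A + p⁻¹ - 1) * p = A * k * p + k - k * p := by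
        linear_combination k * hpp
      rw [this] at h4; linarith
    refine ⟨k, hk0, ?_⟩
    rw [hpdef] at h2; exact_mod_cast h2

theorem sig_tail {α : ℕ → ℝ} (hα : ComputableRealSeq α) (hpos : ∀ n, 0 < α n) :
    Sig fun q : ℕ × ℕ => Tail α q.1 q.2 := by
  obtain ⟨a, hac, ha⟩ := exists_weight_approx hα hpos
  have hN : Computable fun q : (ℕ × ℕ) × ℕ => q.1.2 := Computable.snd.comp Computable.fst
  have hp : Computable fun q : (ℕ × ℕ) × ℕ => 2 ^ (q.1.1 + 2) :=
    primrec_two_pow.to_comp.comp (Primrec.nat_add.to_comp.comp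
      (Computable.fst.comp Computable.fst) (Computable.const 2))
  have hterm : Computable fun q : ((ℕ × ℕ) × ℕ) × ℕ => a (q.2, q.1.2) :=
    hac.comp (Computable.snd.pair (Computable.snd.comp Computable.fst))
  have hl : Computable fun q : (ℕ × ℕ) × ℕ => q.2 * 2 ^ (q.1.1 + 2) +
      2 * q.1.2 * 2 ^ (q.1.1 + 2) :=
    Primrec.nat_add.to_comp.comp (Primrec.nat_mul.to_comp.comp Computable.snd hp)
      (Primrec.nat_mul.to_comp.comp
        (Primrec.nat_mul.to_comp.comp (Computable.const 2) hN) hp)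
  have hr : Computable fun q : (ℕ × ℕ) × ℕ =>
      (∑ n ∈ Finset.range q.1.2, a (n, q.2)) * 2 ^ (q.1.1 + 2) + q.2 :=
    Primrec.nat_add.to_comp.comp (Primrec.nat_mul.to_comp.comp (computable_sum hterm hN) hp)
      Computable.snd
  have h0 : Sig fun q : (ℕ × ℕ) × ℕ => 0 < q.2 := Sig.lt (Computable.const 0) Computable.snd
  have h1 : Sig fun q : (ℕ × ℕ) × ℕ => q.2 * 2 ^ (q.1.1 + 2) + 2 * q.1.2 * 2 ^ (q.1.1 + 2) <
      (∑ n ∈ Finset.range q.1.2, a (n, q.2)) * 2 ^ (q.1.1 + 2) + q.2 := Sig.lt hl hr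
  have h2 : Sig fun q : ℕ × ℕ => ∃ k, 0 < k ∧ k * 2 ^ (q.1 + 2) + 2 * q.2 * 2 ^ (q.1 + 2) <
      (∑ n ∈ Finset.range q.2, a (n, k)) * 2 ^ (q.1 + 2) + k := Sig.ex (h0.and h1)
  exact h2.of_eq fun q => tail_iff ha q.1 q.2

/-- A series with nonzero `tsum` is summable, since `tsum` is `0` on non-summable families. -/
theorem summable_of_tsum_eq_one {α : ℕ → ℝ} (hsum : (∑' n, α n) = 1) : Summable α := by
  by_contra h
  rw [tsum_eq_zero_of_not_summable h] at hsum
  exact zero_ne_one hsum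

theorem exists_tail {α : ℕ → ℝ} (hsum : (∑' n, α n) = 1) (j : ℕ) : ∃ N, Tail α j N := by
  have hs := summable_of_tsum_eq_one hsum
  have ht := hs.hasSum.tendsto_sum_nat
  rw [hsum] at ht
  have hlt : 1 - ((2 : ℝ) ^ (j + 2))⁻¹ < 1 := by
    have : 0 < ((2 : ℝ) ^ (j + 2))⁻¹ := by positivity
    linarith
  obtain ⟨N, hN⟩ := (ht.eventually (lt_mem_nhds hlt)).exists
  exact ⟨N, by unfold Tail; linarith⟩

/-- The sequences that lie in level `j` of the universal test for `Pn n` for all `n < N`, where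
the indices `n ≥ N` carry little weight. -/
def mixOpen (α : ℕ → ℝ) (Pn : ℕ → Measure Seq) (h : (ℕ × ℕ) × ℕ → Option S) (j : ℕ) : Set Seq :=
  {ω | ∃ N, Tail α j N ∧ ∀ n < N, ω ∈ levelOpen Pn h n j}

theorem tsum_ofReal_eq_one {α : ℕ → ℝ} (hpos : ∀ n, 0 < α n) (hsum : (∑' n, α n) = 1) :
    ∑' n, ENNReal.ofReal (α n) = 1 := by
  have hs := summable_of_tsum_eq_one hsum
  rw [← ENNReal.ofReal_tsum_of_nonneg (fun n => (hpos n).le) hs, hsum, ENNReal.ofReal_one]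

/-- The indices `n < N` contribute at most `2^{-(j+2)}`, as each level set does, and the indices
`n ≥ N` contribute at most `2^{-(j+2)}` by their weights. -/
theorem mixture_mixOpen_lt {α : ℕ → ℝ} (hpos : ∀ n, 0 < α n) (hsum : (∑' n, α n) = 1)
    {Pn : ℕ → Measure Seq} (hPn : UnifComputableFam Pn) (h : (ℕ × ℕ) × ℕ → Option S) (j : ℕ) :
    mixture α Pn (mixOpen α Pn h j) < (2⁻¹ : ℝ≥0∞) ^ j := by
  classical
  have hex := exists_tail hsum j
  -- Any `N` with `Tail α j N` is admitted by `mixOpen`, and the least one gives the weakest constraint.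
  obtain ⟨N, hT, hmin⟩ : ∃ N, Tail α j N ∧ ∀ M, Tail α j M → N ≤ M :=
    ⟨Nat.find hex, Nat.find_spec hex, fun _ hM => Nat.find_min' hex hM⟩
  have hsub : mixOpen α Pn h j ⊆ ⋂ n ∈ Finset.range N, levelOpen Pn h n j := by
    rintro ω ⟨M, hM, hω⟩
    simp only [Set.mem_iInter, Finset.mem_range]
    exact fun n hn => hω n (hn.trans_le (hmin M hM))
  have hmeas : MeasurableSet (⋂ n ∈ Finset.range N, levelOpen Pn h n j) :=
    Finset.measurableSet_biInter _ fun n _ => measurableSet_levelOpen Pn h n j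
  refine (measure_mono hsub).trans_lt ?_
  have h1 := tsum_ofReal_eq_one hpos hsum
  have hsplit : ∑ n ∈ Finset.range N, ENNReal.ofReal (α n) + ∑' n, ENNReal.ofReal (α (n + N)) =
      1 := by
    rw [← h1]
    exact Summable.sum_add_tsum_nat_add' (f := fun n => ENNReal.ofReal (α n)) ENNReal.summable
  have hfin : ∑ n ∈ Finset.range N, ENNReal.ofReal (α n) ≤ 1 :=
    le_self_add.trans_eq hsplit
  have htail : ∑' n, ENNReal.ofReal (α (n + N)) ≤ (2⁻¹ : ℝ≥0∞) ^ (j + 2) := by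
    have h2 : 1 < (∑ n ∈ Finset.range N, ENNReal.ofReal (α n)) + (2⁻¹ : ℝ≥0∞) ^ (j + 2) := by
      rw [inv_two_pow_eq, ← ENNReal.ofReal_sum_of_nonneg fun n _ => (hpos n).le,
        ← ENNReal.ofReal_add (Finset.sum_nonneg fun n _ => (hpos n).le) (by positivity),
        ENNReal.one_lt_ofReal]
      exact hT
    rw [← hsplit] at h2
    exact (lt_of_add_lt_add_left h2).le
  set B := ⋂ n ∈ Finset.range N, levelOpen Pn h n j with hBdef
  rw [mixture, Measure.sum_apply _ hmeas]
  simp only [Measure.smul_apply, smul_eq_mul]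
  rw [← Summable.sum_add_tsum_nat_add' (f := fun n => ENNReal.ofReal (α n) * Pn n B) (k := N)
    ENNReal.summable]
  have hA : ∑ n ∈ Finset.range N,
      ENNReal.ofReal (α n) * Pn n B ≤
      (2⁻¹ : ℝ≥0∞) ^ (j + 2) := by
    calc _ ≤ ∑ n ∈ Finset.range N, ENNReal.ofReal (α n) * (2⁻¹ : ℝ≥0∞) ^ (j + 2) :=
          Finset.sum_le_sum fun n hn => mul_le_mul_right ((measure_mono
            (Set.biInter_subset_of_mem hn)).trans (measure_levelOpen_le Pn h n j)) _
      _ ≤ 1 * (2⁻¹ : ℝ≥0∞) ^ (j + 2) := by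
          rw [← Finset.sum_mul]; exact mul_le_mul_left hfin _
      _ = _ := one_mul _
  have hB : ∑' n, ENNReal.ofReal (α (n + N)) *
      Pn (n + N) B ≤ (2⁻¹ : ℝ≥0∞) ^ (j + 2) :=
    (ENNReal.tsum_le_tsum fun n => by
      have := hPn.1 (n + N)
      exact (mul_le_mul_right prob_le_one _).trans_eq (mul_one _)).trans htail
  refine (add_le_add hA hB).trans_lt ?_
  have h4 : (2⁻¹ : ℝ≥0∞) ^ (j + 2) + 2⁻¹ ^ (j + 2) = 2⁻¹ ^ (j + 1) := by
    rw [pow_succ _ (j + 1), ← mul_add, ENNReal.inv_two_add_inv_two, mul_one]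
  rw [h4]
  rw [inv_two_pow_eq, inv_two_pow_eq, ENNReal.ofReal_lt_ofReal_iff (by positivity)]
  exact inv_strictAnti₀ (by positivity) (pow_lt_pow_right₀ one_lt_two (Nat.lt_succ_self j))

/-! ### The test for the mixture -/

theorem mem_testUnion {U : Set (ℕ × S)} {m : ℕ} {ω : Seq} :
    ω ∈ testUnion cyl U m ↔ ∃ x, (m, x) ∈ U ∧ PrefixSeq x ω := by
  simp [testUnion, cyl]

/-- The test for the mixture: strings `x` whose cylinder is seen to lie in `mixOpen α Pn h j` for all
`j ≤ m`. Intersecting over `j ≤ m` makes the levels nested. -/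
def mixTest (α : ℕ → ℝ) (Pn : ℕ → Measure Seq) (h : (ℕ × ℕ) × ℕ → Option S) : Set (ℕ × S) :=
  {q | ∀ j < q.1 + 1, ∃ N, Tail α j N ∧ ∀ n < N,
    ∃ c, ∃ y z : S, Acc Pn h n c (j + c + 3) y ∧ y ++ z = q.2}

theorem reSet_mixTest {α : ℕ → ℝ} (hα : ComputableRealSeq α) (hpos : ∀ n, 0 < α n)
    {Pn : ℕ → Measure Seq} (hPn : UnifComputableFam Pn)
    {h : (ℕ × ℕ) × ℕ → Option S} (hh : Computable h) : RESet (mixTest α Pn h) := by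
  have hbase : Computable fun q : (((((((ℕ × S) × ℕ) × ℕ) × ℕ) × ℕ) × S) × S) => q.1.1.1 :=
    Computable.fst.comp (Computable.fst.comp Computable.fst)
  have hc : Computable fun q : (((((((ℕ × S) × ℕ) × ℕ) × ℕ) × ℕ) × S) × S) => q.1.1.2 :=
    Computable.snd.comp (Computable.fst.comp Computable.fst)
  have hn : Computable fun q : (((((((ℕ × S) × ℕ) × ℕ) × ℕ) × ℕ) × S) × S) => q.1.1.1.2 :=
    Computable.snd.comp hbase
  have hj : Computable fun q : (((((((ℕ × S) × ℕ) × ℕ) × ℕ) × ℕ) × S) × S) => q.1.1.1.1.1.2 :=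
    Computable.snd.comp (Computable.fst.comp (Computable.fst.comp hbase))
  have hx : Computable fun q : (((((((ℕ × S) × ℕ) × ℕ) × ℕ) × ℕ) × S) × S) => q.1.1.1.1.1.1.2 :=
    Computable.snd.comp (Computable.fst.comp (Computable.fst.comp (Computable.fst.comp hbase)))
  have hy : Computable fun q : (((((((ℕ × S) × ℕ) × ℕ) × ℕ) × ℕ) × S) × S) => q.1.2 :=
    Computable.snd.comp Computable.fst
  have hm : Computable fun q : (((((((ℕ × S) × ℕ) × ℕ) × ℕ) × ℕ) × S) × S) =>
      q.1.1.1.1.1.2 + q.1.1.2 + 3 :=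
    Primrec.nat_add.to_comp.comp (Primrec.nat_add.to_comp.comp hj hc) (Computable.const 3)
  have s1 : Sig fun q : (((((((ℕ × S) × ℕ) × ℕ) × ℕ) × ℕ) × S) × S) =>
      Acc Pn h q.1.1.1.2 q.1.1.2 (q.1.1.1.1.1.2 + q.1.1.2 + 3) q.1.2 :=
    (sig_acc hPn hh).comp ((hn.pair (hc.pair hm)).pair hy)
  have s2 : Sig fun q : (((((((ℕ × S) × ℕ) × ℕ) × ℕ) × ℕ) × S) × S) =>
      q.1.2 ++ q.2 = q.1.1.1.1.1.1.2 :=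
    Sig.eq (Computable.list_append.comp hy Computable.snd) hx
  have s3 : Sig fun q : ((((ℕ × S) × ℕ) × ℕ) × ℕ) => ∃ c, ∃ y z : S,
      Acc Pn h q.2 c (q.1.1.2 + c + 3) y ∧ y ++ z = q.1.1.1.2 :=
    Sig.ex (Sig.ex (Sig.ex (s1.and s2)))
  have s4 : Sig fun q : (((ℕ × S) × ℕ) × ℕ) => ∀ n < q.2, ∃ c, ∃ y z : S,
      Acc Pn h n c (q.1.2 + c + 3) y ∧ y ++ z = q.1.1.2 := Sig.ball s3 Computable.snd
  have s5 : Sig fun q : (((ℕ × S) × ℕ) × ℕ) => Tail α q.1.2 q.2 :=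
    (sig_tail hα hpos).comp (f := fun q : (((ℕ × S) × ℕ) × ℕ) => (q.1.2, q.2))
      ((Computable.snd.comp Computable.fst).pair Computable.snd)
  have s6 : Sig fun q : (ℕ × S) × ℕ => ∃ N, Tail α q.2 N ∧ ∀ n < N, ∃ c, ∃ y z : S,
      Acc Pn h n c (q.2 + c + 3) y ∧ y ++ z = q.1.2 := Sig.ex (s5.and s4)
  exact (Sig.ball s6 (Computable.succ.comp Computable.fst)).reSet

theorem testUnion_mixTest_subset (α : ℕ → ℝ) (Pn : ℕ → Measure Seq)
    (h : (ℕ × ℕ) × ℕ → Option S) (m : ℕ) :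
    testUnion cyl (mixTest α Pn h) m ⊆ mixOpen α Pn h m := by
  intro ω hω
  obtain ⟨x, hx, hxω⟩ := mem_testUnion.1 hω
  obtain ⟨N, hN, hx⟩ := hx m (Nat.lt_succ_self m)
  refine ⟨N, hN, fun n hn => ?_⟩
  obtain ⟨c, y, z, hy, hyz⟩ := hx n hn
  exact Set.mem_iUnion.2 ⟨c, y, hy, PrefixSeq.of_prefix hxω ⟨z, hyz⟩⟩

theorem isMLTest_mixTest {α : ℕ → ℝ} (hα : ComputableRealSeq α) (hpos : ∀ n, 0 < α n)
    (hsum : (∑' n, α n) = 1) {Pn : ℕ → Measure Seq} (hPn : UnifComputableFam Pn)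
    {h : (ℕ × ℕ) × ℕ → Option S} (hh : Computable h) :
    IsMLTest cyl (mixture α Pn) (mixTest α Pn h) := by
  refine ⟨reSet_mixTest hα hpos hPn hh, fun m ω hω => ?_, fun m =>
    (measure_mono (testUnion_mixTest_subset α Pn h m)).trans_lt
      (mixture_mixOpen_lt hpos hsum hPn h m)⟩
  obtain ⟨x, hx, hxω⟩ := mem_testUnion.1 hω
  exact mem_testUnion.2 ⟨x, fun j hj => hx j (Nat.lt_succ_of_lt hj), hxω⟩

/-- Membership in `mixOpen` for each `j ≤ m` depends on finitely many prefixes of `ω`, so one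
sufficiently long prefix of `ω` belongs to level `m` of the test. -/
theorem mem_testUnion_mixTest {α : ℕ → ℝ} {Pn : ℕ → Measure Seq}
    {h : (ℕ × ℕ) × ℕ → Option S} {ω : Seq} (hω : ∀ j, ω ∈ mixOpen α Pn h j) (m : ℕ) :
    ω ∈ testUnion cyl (mixTest α Pn h) m := by
  choose N hN hlev using hω
  have hev : ∀ᶠ L in atTop, ∀ j ∈ Finset.range (m + 1), ∀ n ∈ Finset.range (N j),
      ∃ c, ∃ y z : S, Acc Pn h n c (j + c + 3) y ∧ y ++ z = seqTake ω L := by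
    rw [Filter.eventually_all_finset]
    intro j _
    rw [Filter.eventually_all_finset]
    intro n hn
    obtain ⟨c, y, hy, hyω⟩ := Set.mem_iUnion.1 (hlev j n (Finset.mem_range.1 hn))
    filter_upwards [eventually_ge_atTop y.length] with L hL
    obtain ⟨z, hz⟩ := PrefixSeq.prefix_seqTake hyω hL
    exact ⟨c, y, z, hy, hz⟩
  obtain ⟨L, hL⟩ := hev.exists
  refine mem_testUnion.2 ⟨seqTake ω L, fun j hj => ⟨N j, hN j, fun n hn => ?_⟩,
    prefixSeq_seqTake ω L⟩
  exact hL j (Finset.mem_range.2 hj) n (Finset.mem_range.2 hn)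

/-- Universality: the trimmed levels capture every Martin-Löf test for `Pn n`, because no string
of such a test is ever rejected by the measure check. -/
theorem mem_levelOpen_of_test {Pn : ℕ → Measure Seq} {h : (ℕ × ℕ) × ℕ → Option S}
    (huniv : ∀ U : Set (ℕ × S), RESet U → ∃ c, ∀ m x, (m, x) ∈ U ↔ ∃ s, h ((c, m), s) = some x)
    {n : ℕ} {U : Set (ℕ × S)} (hU : IsMLTest cyl (Pn n) U) {ω : Seq}
    (hω : ω ∈ ⋂ m, testUnion cyl U m) (j : ℕ) : ω ∈ levelOpen Pn h n j := by
  obtain ⟨c, hc⟩ := huniv U hU.1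
  obtain ⟨x, hx, hxω⟩ := mem_testUnion.1 (Set.mem_iInter.1 hω (j + c + 3))
  obtain ⟨s, hs⟩ := (hc _ _).1 hx
  refine Set.mem_iUnion.2 ⟨c, x, ⟨s, hs, (measure_mono ?_).trans_lt (hU.2.2 (j + c + 3))⟩, hxω⟩
  rintro ω' ⟨i, -, y, hy, hyω⟩
  exact mem_testUnion.2 ⟨y, (hc _ _).2 ⟨i, hy⟩, hyω⟩

/-! ### Tests for the mixture as tests for the components -/

theorem reSet_shift {U : Set (ℕ × S)} (hU : RESet U) (c : ℕ) :
    RESet {q : ℕ × S | (q.1 + c, q.2) ∈ U} := by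
  obtain ⟨f, hf, rfl⟩ := hU
  have h1 : Computable fun r : (ℕ × S) × ℕ => f r.2 := hf.comp Computable.snd
  have h2 : Computable fun r : (ℕ × S) × ℕ => some (r.1.1 + c, r.1.2) :=
    Computable.option_some.comp ((Primrec.nat_add.to_comp.comp
      (Computable.fst.comp Computable.fst) (Computable.const c)).pair
        (Computable.snd.comp Computable.fst))
  exact (Sig.ex (Sig.eq h1 h2)).reSet

/-- As `2⁻ᶜ ≤ α n`, the bound `2^{-(m+c)}` for the mixture gives `2⁻ᵐ` for `Pn n`, so deleting the
first `c` levels of a test for the mixture leaves a test for `Pn n`. -/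
theorem isMLTest_shift {α : ℕ → ℝ} {Pn : ℕ → Measure Seq} {U : Set (ℕ × S)}
    (hU : IsMLTest cyl (mixture α Pn) U) {n c : ℕ}
    (hc : (2⁻¹ : ℝ≥0∞) ^ c ≤ ENNReal.ofReal (α n)) :
    IsMLTest cyl (Pn n) {q : ℕ × S | (q.1 + c, q.2) ∈ U} := by
  have hshift : ∀ m, testUnion cyl {q : ℕ × S | (q.1 + c, q.2) ∈ U} m =
      testUnion cyl U (m + c) := fun m => by
    ext ω; rw [mem_testUnion, mem_testUnion]; rfl
  refine ⟨reSet_shift hU.1 c, fun m => ?_, fun m => ?_⟩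
  · rw [hshift, hshift, Nat.add_right_comm]
    exact hU.2.1 _
  · rw [hshift]
    have h1 : ENNReal.ofReal (α n) * Pn n (testUnion cyl U (m + c)) ≤
        mixture α Pn (testUnion cyl U (m + c)) :=
      Measure.le_sum (fun n => ENNReal.ofReal (α n) • Pn n) n _
    have h2 : (2⁻¹ : ℝ≥0∞) ^ c * Pn n (testUnion cyl U (m + c)) <
        (2⁻¹ : ℝ≥0∞) ^ c * (2⁻¹ : ℝ≥0∞) ^ m := by
      rw [← pow_add, add_comm c m]
      exact ((mul_le_mul_left hc _).trans h1).trans_lt (hU.2.2 (m + c))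
    exact lt_of_mul_lt_mul_left' h2

/-- Lemma 5: randomness for a countable mixture P = Σ_n α(n) P_n of a
uniformly computable family, with α a computable positive probability on ℕ:
R^P = ∪_n R^{P_n}. -/
theorem mixture_randomness (Pn : ℕ → Measure Seq) (hPn : UnifComputableFam Pn)
    (α : ℕ → ℝ) (hα : ComputableRealSeq α) (hpos : ∀ n, 0 < α n)
    (hsum : (∑' n, α n) = 1) :
    {ω : Seq | Random1 (mixture α Pn) ω} = ⋃ n, {ω : Seq | Random1 (Pn n) ω} := by
  ext ω
  simp only [Set.mem_ofPred_eq, Set.mem_iUnion]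
  constructor
  · intro hω
    by_contra! hnot
    obtain ⟨h, hh, huniv⟩ := exists_universal
    refine hω _ (isMLTest_mixTest hα hpos hsum hPn hh) (Set.mem_iInter.2 fun m =>
      mem_testUnion_mixTest (fun j => ?_) m)
    obtain ⟨N, hN⟩ := exists_tail hsum j
    refine ⟨N, hN, fun n _ => ?_⟩
    have hn := hnot n
    simp only [Random1, MLRandom, not_forall, not_not] at hn
    obtain ⟨U, hU, hωU⟩ := hn
    exact mem_levelOpen_of_test huniv hU hωU j
  · rintro ⟨n, hω⟩ U hU hmem
    obtain ⟨c, hc⟩ := ENNReal.exists_inv_two_pow_lt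
      (a := ENNReal.ofReal (α n)) (ENNReal.ofReal_pos.2 (hpos n)).ne'
    refine hω _ (isMLTest_shift hU hc.le) (Set.mem_iInter.2 fun m => ?_)
    obtain ⟨x, hx, hxω⟩ := mem_testUnion.1 (Set.mem_iInter.1 hmem (m + c))
    exact mem_testUnion.2 ⟨x, hx, hxω⟩

end AlgRand
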